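/- Relative Completeness of the Approximate Automata: Let ρ : q_𝒜 →^{σ⃗_{1..m}} q_m be a run of the full automaton 𝒜(ω)^{(P,ν)}_{(τ,τ')} and let k be the number of occurrences of σ⃗_{i+1} in the sequence σ⃗_{(i+1)..m}, where i is the least index with q_{i+1} = ⊤ (taking k = 0 when no such i exists). Then for each n ≥ k, ρ' : q_𝒜 →^{σ⃗_{1..m}} q'_m is a run of 𝒜(n)^{(P,ν)}_{(τ,τ')}, where q'_j = q_j if j ≤ i (or j ≤ m if no such i exists) and otherwise q'_j = ⊤^{k'}_{σ⃗_{i+1}} with k' the number of occurrences of σ⃗_{i+1} in σ⃗_{(i+1)..j}; moreover V(ρ) = V(ρ'). -/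

import Mathlib

noncomputable section

/-- We work with ordinals in universe 0. -/
abbrev Ordl : Type 1 := Ordinal.{0}

/-- Reverse ordinal sum: `revSum d k = d (k-1) + ⋯ + d 0` (and `0` for `k = 0`). -/
def revSum (d : ℕ → Ordl) : ℕ → Ordl
  | 0 => 0
  | k + 1 => d k + revSum d k

/-- An abstract entailment system: antecedents, consequents, models, the two
satisfaction relations, and finite sets of trace values for antecedents and
consequents (drawn from the disjoint types `TA` and `TC`). -/
structure CES where
  A : Type
  C : Type
  M : Type
  TA : Type
  TC : Type
  satA : M → A → Prop
  satC : M → C → Prop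
  tvA : A → Finset TA
  tvC : C → Finset TC

/-- Validity of a sequent `A ⊢ C`: every model of the antecedent satisfies the consequent. -/
def CES.Valid (S : CES) (s : S.A × S.C) : Prop :=
  ∀ m : S.M, S.satA m s.1 → S.satC m s.2

/-- A cyclic pre-proof: a finite directed graph whose nodes carry sequents and
(ordered) lists of children, together with the trace pair functions `δ1` (on
antecedent trace values) and `δ2` (on consequent trace values) attached to the
rule instance at each node/premise.  `δ1`/`δ2` are partial (Option-valued) and
only defined along edges, on trace values of the respective sequents. -/
structure PreProof (S : CES) where
  Node : Type
  [fintypeNode : Fintype Node]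
  [decEqNode : DecidableEq Node]
  seqOf : Node → S.A × S.C
  children : Node → List Node
  δ1 : Node → Node → S.TA → S.TA → Option Ordl
  δ2 : Node → Node → S.TC → S.TC → Option Ordl
  δ1_dom : ∀ ν ν' τ τ', (δ1 ν ν' τ τ').isSome →
    ν' ∈ children ν ∧ τ ∈ S.tvA (seqOf ν).1 ∧ τ' ∈ S.tvA (seqOf ν').1
  δ2_dom : ∀ ν ν' τ τ', (δ2 ν ν' τ τ').isSome →
    ν' ∈ children ν ∧ τ ∈ S.tvC (seqOf ν).2 ∧ τ' ∈ S.tvC (seqOf ν').2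

attribute [instance] PreProof.fintypeNode PreProof.decEqNode

/-- An ordinal trace function: partial ordinal-valued functions on
(antecedent resp. consequent) trace value/model pairs, defined at least on all
`(τ, m)` with `τ ∈ tvA A` and `m ⊨ A`. -/
structure OTF (S : CES) where
  OA : S.TA → S.M → Option Ordl
  OC : S.TC → S.M → Option Ordl
  definedA : ∀ (a : S.A) (τ : S.TA) (m : S.M),
    τ ∈ S.tvA a → S.satA m a → (OA τ m).isSome

/-- `1̲`: the least value taken by the ordinal trace function. -/
def OTF.leastVal {S : CES} (O : OTF S) : Ordl :=
  sInf {o : Ordl | (∃ τ m, O.OA τ m = some o) ∨ (∃ τ m, O.OC τ m = some o)}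

/-- A sequent `s` equates trace values `τa` and `τc`: whenever `s` is valid,
every model of the antecedent realizing `τc` realizes `τa` with the same size. -/
def OTF.Equates {S : CES} (O : OTF S) (s : S.A × S.C) (τa : S.TA) (τc : S.TC) : Prop :=
  S.Valid s → ∀ m : S.M, S.satA m s.1 →
    ∀ o : Ordl, O.OC τc m = some o → O.OA τa m = some o

namespace PreProof

variable {S : CES}

/-- A node is axiomatic when its rule instance has no premises. -/
def Axiomatic (P : PreProof S) (ν : P.Node) : Prop := P.children ν = []

/-- `νs 0, …, νs (n-1)` is a (finite) path in the pre-proof. -/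
def IsPath (P : PreProof S) (n : ℕ) (νs : ℕ → P.Node) : Prop :=
  ∀ i, i + 1 < n → νs (i + 1) ∈ P.children (νs i)

/-- An infinite path in the pre-proof. -/
def InfPath (P : PreProof S) (νs : ℕ → P.Node) : Prop :=
  ∀ i, νs (i + 1) ∈ P.children (νs i)

/-- A left-hand trace `τs 0, …, τs (k-1)` follows (an initial segment of) the
path `νs 0, …, νs (n-1)`. -/
def FollowsL (P : PreProof S) (n : ℕ) (νs : ℕ → P.Node) (k : ℕ) (τs : ℕ → S.TA) : Prop :=
  k ≤ n ∧ (∀ i < k, τs i ∈ S.tvA (P.seqOf (νs i)).1) ∧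
    ∀ i, i + 1 < k → (P.δ1 (νs i) (νs (i + 1)) (τs i) (τs (i + 1))).isSome

/-- A right-hand trace `τs 0, …, τs (k-1)` follows (an initial segment of) the
path `νs 0, …, νs (n-1)`. -/
def FollowsR (P : PreProof S) (n : ℕ) (νs : ℕ → P.Node) (k : ℕ) (τs : ℕ → S.TC) : Prop :=
  k ≤ n ∧ (∀ i < k, τs i ∈ S.tvC (P.seqOf (νs i)).2) ∧
    ∀ i, i + 1 < k → (P.δ2 (νs i) (νs (i + 1)) (τs i) (τs (i + 1))).isSome

/-- The `δ1`-value of the `i`-th step of a left-hand trace along a path. -/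
def stepL (P : PreProof S) (νs : ℕ → P.Node) (τs : ℕ → S.TA) (i : ℕ) : Ordl :=
  (P.δ1 (νs i) (νs (i + 1)) (τs i) (τs (i + 1))).getD 0

/-- The `δ2`-value of the `i`-th step of a right-hand trace along a path. -/
def stepR (P : PreProof S) (νs : ℕ → P.Node) (τs : ℕ → S.TC) (i : ℕ) : Ordl :=
  (P.δ2 (νs i) (νs (i + 1)) (τs i) (τs (i + 1))).getD 0

/-- Size `Θ` of a left-hand trace of length `k` along a path: the *reverse*
ordinal sum `δ1(τ_{k-2},τ_{k-1}) + ⋯ + δ1(τ_0,τ_1)`. -/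
def thetaL (P : PreProof S) (νs : ℕ → P.Node) (τs : ℕ → S.TA) (k : ℕ) : Ordl :=
  revSum (P.stepL νs τs) (k - 1)

/-- Size `Θ` of a right-hand trace of length `k` along a path (reverse sum). -/
def thetaR (P : PreProof S) (νs : ℕ → P.Node) (τs : ℕ → S.TC) (k : ℕ) : Ordl :=
  revSum (P.stepR νs τs) (k - 1)

/-- The global soundness condition: every infinite path has a tail followed by
an infinitely progressing left-hand trace. -/
def GlobalSound (P : PreProof S) : Prop :=
  ∀ νs : ℕ → P.Node, P.InfPath νs →
    ∃ (k : ℕ) (τs : ℕ → S.TA),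
      (∀ i, (P.δ1 (νs (k + i)) (νs (k + i + 1)) (τs i) (τs (i + 1))).isSome) ∧
      ∀ N, ∃ i, N ≤ i ∧
        ∃ α : Ordl, P.δ1 (νs (k + i)) (νs (k + i + 1)) (τs i) (τs (i + 1)) = some α ∧ 0 < α

/-- A (valid) cyclic proof: a pre-proof satisfying the global soundness
condition; consequently (and we record it as part of the notion) all sequents
occurring in it are valid. -/
def IsCyclicProof (P : PreProof S) : Prop :=
  P.GlobalSound ∧ ∀ ν : P.Node, S.Valid (P.seqOf ν)

/-- The descending counter-model property of an ordinal trace function. -/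
def DCM (P : PreProof S) (O : OTF S) : Prop :=
  ∀ (ν : P.Node) (m : S.M),
    S.satA m (P.seqOf ν).1 → ¬ S.satC m (P.seqOf ν).2 →
    ∃ ν' ∈ P.children ν, ∃ m' : S.M,
      S.satA m' (P.seqOf ν').1 ∧ ¬ S.satC m' (P.seqOf ν').2 ∧
      ∀ (τ τ' : S.TA) (α : Ordl), P.δ1 ν ν' τ τ' = some α →
        ∀ o : Ordl, O.OA τ m = some o →
          ∃ o' : Ordl, O.OA τ' m' = some o' ∧ o' + α ≤ o

/-- A right-hand trace value is terminal for a node when it has no successor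
trace value towards any premise. -/
def TerminalR (P : PreProof S) (ν : P.Node) (σ : S.TC) : Prop :=
  ∀ ν' ∈ P.children ν, ∀ σ', P.δ2 ν ν' σ σ' = none

/-- Defining property of the exclusion predicate: a rule instance (node)
excludes a consequent trace value only if no model of the antecedent realizes
it. -/
def ExclOK (P : PreProof S) (O : OTF S) (Excl : P.Node → S.TC → Prop) : Prop :=
  ∀ (ν : P.Node) (σ : S.TC), Excl ν σ →
    ∀ m : S.M, S.satA m (P.seqOf ν).1 → O.OC σ m = none

/-- A consequent trace value is ground w.r.t. a node: if the node's sequent is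
valid then the value is realized only with the least possible size. -/
def Ground (P : PreProof S) (O : OTF S) (ν : P.Node) (σ : S.TC) : Prop :=
  S.Valid (P.seqOf ν) → ∀ m : S.M, S.satA m (P.seqOf ν).1 →
    ∀ o : Ordl, O.OC σ m = some o → o = O.leastVal

/-- The trace value ordering relation `τ2 ∼^ν_P τ1` (`∼` is `<` when
`strict = true` and `≤` otherwise). -/
def TVO (P : PreProof S) (O : OTF S) (Excl : P.Node → S.TC → Prop) (strict : Bool)
    (ν0 : P.Node) (τ1 : S.TA) (τ2 : S.TC) : Prop :=
  ∀ (n : ℕ) (νs : ℕ → P.Node) (τs : ℕ → S.TC),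
    1 ≤ n → P.IsPath n νs → νs 0 = ν0 → τs 0 = τ2 →
    P.FollowsR n νs n τs →
    P.TerminalR (νs (n - 1)) (τs (n - 1)) →
    ¬ Excl (νs (n - 1)) (τs (n - 1)) →
    ∃ (k : ℕ) (τs' : ℕ → S.TA),
      1 ≤ k ∧ k ≤ n ∧ τs' 0 = τ1 ∧ P.FollowsL n νs k τs' ∧
      (if strict then P.thetaR νs τs n < P.thetaL νs τs' k
        else P.thetaR νs τs n ≤ P.thetaL νs τs' k) ∧
      (P.Ground O (νs (n - 1)) (τs (n - 1)) ∨
        (P.Axiomatic (νs (n - 1)) ∧ k = n ∧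
          O.Equates (P.seqOf (νs (n - 1))) (τs' (n - 1)) (τs (n - 1))))

/-- The descending model property of an ordinal trace function. -/
def DMP (P : PreProof S) (O : OTF S) : Prop :=
  ∀ ν : P.Node, P.children ν ≠ [] →
    S.Valid (P.seqOf ν) → (∀ ν' ∈ P.children ν, S.Valid (P.seqOf ν')) →
    ∀ τ1 ∈ S.tvA (P.seqOf ν).1, ∀ τ2 ∈ S.tvC (P.seqOf ν).2,
    ∀ m : S.M, S.satA m (P.seqOf ν).1 →
    ∃ ν' ∈ P.children ν, ∃ m' : S.M,
      S.satA m' (P.seqOf ν').1 ∧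
      (P.TerminalR ν τ2 ∨ ∃ σ', (P.δ2 ν ν' τ2 σ').isSome) ∧
      (∀ (σ' : S.TA) (α : Ordl), P.δ1 ν ν' τ1 σ' = some α →
        ∀ o : Ordl, O.OA τ1 m = some o →
          ∃ o' : Ordl, O.OA σ' m' = some o' ∧ o' + α ≤ o) ∧
      (∀ (σ' : S.TC) (α : Ordl), P.δ2 ν ν' τ2 σ' = some α →
        ∀ o : Ordl, O.OC τ2 m = some o →
          ∃ o' : Ordl, O.OC σ' m' = some o' ∧ o ≤ o' + α)

/-- A sequence of models supports a left-hand trace along a path. -/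
def SupportsL (P : PreProof S) (O : OTF S) (n : ℕ) (νs : ℕ → P.Node) (k : ℕ)
    (τs : ℕ → S.TA) (ms : ℕ → S.M) : Prop :=
  P.FollowsL n νs k τs ∧
    (∀ i < k, S.satA (ms i) (P.seqOf (νs i)).1 ∧ (O.OA (τs i) (ms i)).isSome) ∧
    ∀ j, j + 1 < k → ∀ o o' : Ordl, O.OA (τs j) (ms j) = some o →
      O.OA (τs (j + 1)) (ms (j + 1)) = some o' →
      o' + P.stepL νs τs j ≤ o

/-- A sequence of models supports a right-hand trace along a path. -/
def SupportsR (P : PreProof S) (O : OTF S) (n : ℕ) (νs : ℕ → P.Node) (k : ℕ)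
    (τs : ℕ → S.TC) (ms : ℕ → S.M) : Prop :=
  P.FollowsR n νs k τs ∧
    (∀ i < k, S.satC (ms i) (P.seqOf (νs i)).2 ∧ (O.OC (τs i) (ms i)).isSome) ∧
    ∀ j, j + 1 < k → ∀ o o' : Ordl, O.OC (τs j) (ms j) = some o →
      O.OC (τs (j + 1)) (ms (j + 1)) = some o' →
      o ≤ o' + P.stepR νs τs j

/-- `(ν', τ')` is reachable from `(ν, τ)` on the left. -/
def ReachL (P : PreProof S) (ν : P.Node) (τ : S.TA) (ν' : P.Node) (τ' : S.TA) : Prop :=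
  ∃ (n : ℕ) (νs : ℕ → P.Node) (τs : ℕ → S.TA),
    1 ≤ n ∧ P.IsPath n νs ∧ P.FollowsL n νs n τs ∧
    νs 0 = ν ∧ τs 0 = τ ∧ νs (n - 1) = ν' ∧ τs (n - 1) = τ'

/-- `(ν', τ')` is reachable from `(ν, τ)` on the right. -/
def ReachR (P : PreProof S) (ν : P.Node) (τ : S.TC) (ν' : P.Node) (τ' : S.TC) : Prop :=
  ∃ (n : ℕ) (νs : ℕ → P.Node) (τs : ℕ → S.TC),
    1 ≤ n ∧ P.IsPath n νs ∧ P.FollowsR n νs n τs ∧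
    νs 0 = ν ∧ τs 0 = τ ∧ νs (n - 1) = ν' ∧ τs (n - 1) = τ'

/-- A left cycle along a path. -/
def IsCycleL (P : PreProof S) (n : ℕ) (νs : ℕ → P.Node) (τs : ℕ → S.TA) : Prop :=
  2 ≤ n ∧ P.IsPath n νs ∧ P.FollowsL n νs n τs ∧ νs (n - 1) = νs 0 ∧ τs (n - 1) = τs 0

/-- A right cycle along a path. -/
def IsCycleR (P : PreProof S) (n : ℕ) (νs : ℕ → P.Node) (τs : ℕ → S.TC) : Prop :=
  2 ≤ n ∧ P.IsPath n νs ∧ P.FollowsR n νs n τs ∧ νs (n - 1) = νs 0 ∧ τs (n - 1) = τs 0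

/-- A simple left cycle. -/
def IsSimpleCycleL (P : PreProof S) (n : ℕ) (νs : ℕ → P.Node) (τs : ℕ → S.TA) : Prop :=
  P.IsCycleL n νs τs ∧
    ∀ i j, 1 ≤ i → i < j → j ≤ n - 1 → ¬ (νs i = νs j ∧ τs i = τs j)

/-- A simple right cycle. -/
def IsSimpleCycleR (P : PreProof S) (n : ℕ) (νs : ℕ → P.Node) (τs : ℕ → S.TC) : Prop :=
  P.IsCycleR n νs τs ∧
    ∀ i j, 1 ≤ i → i < j → j ≤ n - 1 → ¬ (νs i = νs j ∧ τs i = τs j)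

/-- A simple left binary cycle. -/
def IsSimpleBinCycleL (P : PreProof S) (n : ℕ) (νs : ℕ → P.Node)
    (τs τs' : ℕ → S.TA) : Prop :=
  P.IsCycleL n νs τs ∧ P.IsCycleL n νs τs' ∧
    ∀ i j, 1 ≤ i → i < j → j ≤ n - 1 →
      ¬ (νs i = νs j ∧ τs i = τs j ∧ τs' i = τs' j)

/-- `P` is left finitely progressing w.r.t. `(ν0, τ0)`. -/
def FinProgL (P : PreProof S) (ν0 : P.Node) (τ0 : S.TA) : Prop :=
  ∀ (ν1 ν2 : P.Node) (τ1 τ2 : S.TA) (α : Ordl),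
    P.ReachL ν0 τ0 ν1 τ1 → P.δ1 ν1 ν2 τ1 τ2 = some α → α < Ordinal.omega0

/-- `P` is right finitely progressing w.r.t. `(ν0, τ0)`. -/
def FinProgR (P : PreProof S) (ν0 : P.Node) (τ0 : S.TC) : Prop :=
  ∀ (ν1 ν2 : P.Node) (τ1 τ2 : S.TC) (α : Ordl),
    P.ReachR ν0 τ0 ν1 τ1 → P.δ2 ν1 ν2 τ1 τ2 = some α → α < Ordinal.omega0

/-- `P` is dynamic w.r.t. `ν0`, `τA`, `τC`: every reachable left or right
simple cycle has strictly positive size. -/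
def Dynamic (P : PreProof S) (ν0 : P.Node) (τA : S.TA) (τC : S.TC) : Prop :=
  (∀ (n : ℕ) (νs : ℕ → P.Node) (τs : ℕ → S.TA), P.IsSimpleCycleL n νs τs →
    P.ReachL ν0 τA (νs 0) (τs 0) → 0 < P.thetaL νs τs n) ∧
  (∀ (n : ℕ) (νs : ℕ → P.Node) (τs : ℕ → S.TC), P.IsSimpleCycleR n νs τs →
    P.ReachR ν0 τC (νs 0) (τs 0) → 0 < P.thetaR νs τs n)

/-- `P` is balanced w.r.t. `(ν0, τA)`: the two components of every reachable
simple left binary cycle have equal size. -/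
def Balanced (P : PreProof S) (ν0 : P.Node) (τA : S.TA) : Prop :=
  ∀ (n : ℕ) (νs : ℕ → P.Node) (τs τs' : ℕ → S.TA), P.IsSimpleBinCycleL n νs τs τs' →
    P.ReachL ν0 τA (νs 0) (τs 0) → P.ReachL ν0 τA (νs 0) (τs' 0) →
    P.thetaL νs τs n = P.thetaL νs τs' n

/-- The trace width `W(P)`. -/
def traceWidth (P : PreProof S) : ℕ :=
  Finset.univ.sup fun ν : P.Node =>
    max (S.tvA (P.seqOf ν).1).card (S.tvC (P.seqOf ν).2).card

/-- The (binary left-hand) cycle threshold `C(P)`: the number of triples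
`(σ, σ', μ)` with `σ, σ' ∈ TraceVals_A(μ)`. -/
def cycThreshold (P : PreProof S) : ℕ :=
  ∑ ν : P.Node, (S.tvA (P.seqOf ν).1).card * (S.tvA (P.seqOf ν).1).card

/-- `maxStep(P)`: the maximum (finite) `δ1`-value over the edges of `P`. -/
def maxStepN (P : PreProof S) : ℕ :=
  sSup {k : ℕ | ∃ ν ν' τ τ', P.δ1 ν ν' τ τ' = some (k : Ordl)}

/-- The in-degree of the proof graph. -/
def inDeg (P : PreProof S) : ℕ :=
  Finset.univ.sup fun ν' : P.Node =>
    (Finset.univ.filter fun ν : P.Node => ν' ∈ P.children ν).card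

/-- The trace pair function of `P` is trace injective. -/
def TraceInjective (P : PreProof S) : Prop :=
  (∀ (ν ν' : P.Node) (τ τ' τ'' : S.TA),
    (P.δ1 ν ν' τ τ'').isSome → (P.δ1 ν ν' τ' τ'').isSome → τ = τ') ∧
  (∀ (ν ν' : P.Node) (σ σ' σ'' : S.TC),
    (P.δ2 ν ν' σ σ'').isSome → (P.δ2 ν ν' σ' σ'').isSome → σ = σ')

/-- `T_ν(σ)`: the set of antecedent trace values of `ν` equated to `σ`
by the sequent of `ν`. -/
def Tset (P : PreProof S) (O : OTF S) (ν : P.Node) (σ : S.TC) : Set S.TA :=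
  {τ : S.TA | τ ∈ S.tvA (P.seqOf ν).1 ∧ O.Equates (P.seqOf ν) τ σ}

end PreProof

/-! ### Weighted automata over the ordinal max-plus semiring -/

/-- The alphabet `Σ_P`. -/
abbrev Sig {S : CES} (P : PreProof S) : Type := P.Node ⊕ (Set S.TA × S.TC)

/-- States of the antecedent automata (`⊤ⁱ_μ` states are used only by the
approximate automata). -/
inductive AState (Node TA : Type) : Type
  | init : AState Node TA
  | pair : Node → TA → AState Node TA
  | bot : AState Node TA
  | top : AState Node TA
  | topn : Node → ℕ → AState Node TA

instance {Node TA : Type} : Inhabited (AState Node TA) := ⟨AState.init⟩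

/-- States of the consequent automaton. -/
inductive BState (Node TC : Type) : Type
  | init : BState Node TC
  | pair : Node → TC → BState Node TC
  | bot : BState Node TC

instance {Node TC : Type} : Inhabited (BState Node TC) := ⟨BState.init⟩

/-- Transition relation of the (full) antecedent automaton `𝒜^{(P,ν0)}_{(τ1,·)}`. -/
inductive ATrans {S : CES} (P : PreProof S) (O : OTF S) (ν0 : P.Node) (τ1 : S.TA) :
    AState P.Node S.TA → Sig P → AState P.Node S.TA → Prop
  | start : ATrans P O ν0 τ1 .init (Sum.inl ν0) (.pair ν0 τ1)
  | step {μ μ' : P.Node} {σ σ' : S.TA} (h1 : μ' ∈ P.children μ)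
      (h2 : (P.δ1 μ μ' σ σ').isSome) :
      ATrans P O ν0 τ1 (.pair μ σ) (Sum.inl μ') (.pair μ' σ')
  | toBot {μ : P.Node} {σ : S.TA} {σ' : S.TC} (h1 : P.Axiomatic μ)
      (h2 : σ' ∈ S.tvC (P.seqOf μ).2) (h3 : σ ∈ P.Tset O μ σ') :
      ATrans P O ν0 τ1 (.pair μ σ) (Sum.inr (P.Tset O μ σ', σ')) .bot
  | toTop {μ μ' : P.Node} {σ : S.TA} (h : μ' ∈ P.children μ) :
      ATrans P O ν0 τ1 (.pair μ σ) (Sum.inl μ') .top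
  | topLoop (μ : P.Node) : ATrans P O ν0 τ1 .top (Sum.inl μ) .top

/-- Transition relation of the approximate antecedent automaton `𝒜(n)^{(P,ν0)}_{(τ1,·)}`. -/
inductive ATransN {S : CES} (P : PreProof S) (O : OTF S) (n : ℕ) (ν0 : P.Node) (τ1 : S.TA) :
    AState P.Node S.TA → Sig P → AState P.Node S.TA → Prop
  | start : ATransN P O n ν0 τ1 .init (Sum.inl ν0) (.pair ν0 τ1)
  | step {μ μ' : P.Node} {σ σ' : S.TA} (h1 : μ' ∈ P.children μ)
      (h2 : (P.δ1 μ μ' σ σ').isSome) :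
      ATransN P O n ν0 τ1 (.pair μ σ) (Sum.inl μ') (.pair μ' σ')
  | toBot {μ : P.Node} {σ : S.TA} {σ' : S.TC} (h1 : P.Axiomatic μ)
      (h2 : σ' ∈ S.tvC (P.seqOf μ).2) (h3 : σ ∈ P.Tset O μ σ') :
      ATransN P O n ν0 τ1 (.pair μ σ) (Sum.inr (P.Tset O μ σ', σ')) .bot
  | toTopn {μ μ' : P.Node} {σ : S.TA} (h : μ' ∈ P.children μ) :
      ATransN P O n ν0 τ1 (.pair μ σ) (Sum.inl μ') (.topn μ' 1)
  | topnStay {μ μ' : P.Node} {i : ℕ} (h1 : 0 < i) (h2 : i ≤ n) (h3 : μ' ≠ μ) :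
      ATransN P O n ν0 τ1 (.topn μ i) (Sum.inl μ') (.topn μ i)
  | topnStep {μ : P.Node} {i : ℕ} (h1 : 0 < i) (h2 : i < n) :
      ATransN P O n ν0 τ1 (.topn μ i) (Sum.inl μ) (.topn μ (i + 1))

/-- Transition relation of the consequent automaton `ℬ^{(P,ν0)}_{(·,τ2)}`. -/
inductive BTrans {S : CES} (P : PreProof S) (O : OTF S) (Excl : P.Node → S.TC → Prop)
    (ν0 : P.Node) (τ2 : S.TC) :
    BState P.Node S.TC → Sig P → BState P.Node S.TC → Prop
  | start : BTrans P O Excl ν0 τ2 .init (Sum.inl ν0) (.pair ν0 τ2)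
  | step {μ μ' : P.Node} {σ σ' : S.TC} (h1 : μ' ∈ P.children μ)
      (h2 : (P.δ2 μ μ' σ σ').isSome) :
      BTrans P O Excl ν0 τ2 (.pair μ σ) (Sum.inl μ') (.pair μ' σ')
  | toBot {μ : P.Node} {σ : S.TC} (h1 : P.Axiomatic μ) (h2 : σ ∈ S.tvC (P.seqOf μ).2)
      (h3 : ¬ P.Ground O μ σ) (h4 : ¬ Excl μ σ) :
      BTrans P O Excl ν0 τ2 (.pair μ σ) (Sum.inr (P.Tset O μ σ, σ)) .bot

/-- Weight function of the antecedent automata (the only potentially non-zero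
weights sit on pair-to-pair transitions, where they are given by `δ1`). -/
def Awt {S : CES} (P : PreProof S) :
    AState P.Node S.TA → Sig P → AState P.Node S.TA → Ordl
  | .pair μ σ, _, .pair μ' σ' => (P.δ1 μ μ' σ σ').getD 0
  | _, _, _ => 0

/-- Weight function of the consequent automaton. -/
def Bwt {S : CES} (P : PreProof S) :
    BState P.Node S.TC → Sig P → BState P.Node S.TC → Ordl
  | .pair μ σ, _, .pair μ' σ' => (P.δ2 μ μ' σ σ').getD 0
  | _, _, _ => 0

/-- `q` is a run over the word `σ 0, …, σ (m-1)` (from the initial state `q0`). -/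
def IsRun {Q A : Type*} (T : Q → A → Q → Prop) (q0 : Q) (m : ℕ) (σ : ℕ → A)
    (q : ℕ → Q) : Prop :=
  q 0 = q0 ∧ ∀ i < m, T (q i) (σ i) (q (i + 1))

/-- The value of a run: the `⊗`-product (i.e. reverse ordinal sum) of the
weights of its transitions. -/
def runVal {Q A : Type*} (wt : Q → A → Q → Ordl) (m : ℕ) (σ : ℕ → A) (q : ℕ → Q) : Ordl :=
  revSum (fun i => wt (q i) (σ i) (q (i + 1))) m

/-- The quantitative language of a weighted automaton: `⊥` (i.e. `none`) if the
word admits no accepting run, and otherwise the supremum (maximum) of the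
values of its accepting runs. -/
def Lang {Q A : Type*} (T : Q → A → Q → Prop) (q0 : Q) (F : Q → Prop)
    (wt : Q → A → Q → Ordl) (m : ℕ) (σ : ℕ → A) : Option Ordl := by
  classical
  exact if (∃ q : ℕ → Q, IsRun T q0 m σ q ∧ F (q m)) then
    some (sSup {v : Ordl | ∃ q : ℕ → Q, IsRun T q0 m σ q ∧ F (q m) ∧ v = runVal wt m σ q})
  else none

/-- Ordering of quantitative language values, with `⊥ = none` below everything. -/
def OptLE : Option Ordl → Option Ordl → Prop
  | none, _ => True
  | some _, none => False
  | some a, some b => a ≤ b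

/-- Strict ordering of quantitative language values on defined (non-`⊥`) values. -/
def OptLT : Option Ordl → Option Ordl → Prop
  | none, _ => True
  | some _, none => False
  | some a, some b => a < b

/-- `∼` on language values: `<` when `strict`, else `≤`. -/
def OptOrd (strict : Bool) : Option Ordl → Option Ordl → Prop :=
  fun x y => if strict then OptLT x y else OptLE x y

/-- Final states of the antecedent automata: all non-initial states. -/
def AFinal {Node TA : Type} : AState Node TA → Prop := fun q => q ≠ .init

/-- Final states of the consequent automaton. -/
def BFinal {S : CES} (P : PreProof S) (O : OTF S) (Excl : P.Node → S.TC → Prop) :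
    BState P.Node S.TC → Prop
  | .init => False
  | .bot => True
  | .pair μ σ => ¬ Excl μ σ ∧
      ((¬ P.Axiomatic μ ∧ P.TerminalR μ σ) ∨ (P.Axiomatic μ ∧ P.Ground O μ σ))

/-- The quantitative language of `𝒜^{(P,ν0)}_{(τ1,τ2)}` (it does not depend on `τ2`). -/
def LangA {S : CES} (P : PreProof S) (O : OTF S) (ν0 : P.Node) (τ1 : S.TA) :
    ℕ → (ℕ → Sig P) → Option Ordl :=
  Lang (ATrans P O ν0 τ1) .init AFinal (Awt P)

/-- The quantitative language of `𝒜(n)^{(P,ν0)}_{(τ1,τ2)}`. -/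
def LangAN {S : CES} (P : PreProof S) (O : OTF S) (n : ℕ) (ν0 : P.Node) (τ1 : S.TA) :
    ℕ → (ℕ → Sig P) → Option Ordl :=
  Lang (ATransN P O n ν0 τ1) .init AFinal (Awt P)

/-- The quantitative language of `ℬ^{(P,ν0)}_{(τ1,τ2)}` (it does not depend on `τ1`). -/
def LangB {S : CES} (P : PreProof S) (O : OTF S) (Excl : P.Node → S.TC → Prop)
    (ν0 : P.Node) (τ2 : S.TC) : ℕ → (ℕ → Sig P) → Option Ordl :=
  Lang (BTrans P O Excl ν0 τ2) .init (BFinal P O Excl) (Bwt P)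

/-- The automaton `ℬ^{(P,ν0)}_{(·,τ2)}` is grounded: every reachable final pair
state carries a trace value that is ground w.r.t. its node. -/
def BGrounded {S : CES} (P : PreProof S) (O : OTF S) (Excl : P.Node → S.TC → Prop)
    (ν0 : P.Node) (τ2 : S.TC) : Prop :=
  ∀ (μ : P.Node) (σ : S.TC),
    (∃ (m : ℕ) (w : ℕ → Sig P) (q : ℕ → BState P.Node S.TC),
      IsRun (BTrans P O Excl ν0 τ2) .init m w q ∧ q m = .pair μ σ ∧
        BFinal P O Excl (.pair μ σ)) →
    P.Ground O μ σ

/-- Collapse the graded sink states of an approximate automaton onto `⊤`. -/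
def collapseTop {Node TA : Type} : AState Node TA → AState Node TA
  | .topn _ _ => .top
  | q => q

/-- The number of occurrences of the letter `a` among `σ lo, …, σ (hi - 1)`. -/
def cnt {A : Type*} (σ : ℕ → A) (a : A) (lo hi : ℕ) : ℕ := by
  classical
  exact ((Finset.Ico lo hi).filter fun t => σ t = a).card

/-- The set of runs (as lists of states) of an automaton on a word. -/
def RunsOn {Q A : Type*} [Inhabited Q] (T : Q → A → Q → Prop) (q0 : Q)
    (w : List A) : Set (List Q) :=
  {l : List Q | l.length = w.length + 1 ∧ l.getD 0 default = q0 ∧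
    ∀ i, ∀ h : i < w.length, T (l.getD i default) (w.get ⟨i, h⟩) (l.getD (i + 1) default)}

end

/-!
Once a run of the full automaton enters `⊤` it stays there, so from then on only the letters matter:
grading each later `⊤` by the number of occurrences so far of the letter that caused the entry gives
exactly the moves between the states `⊤^i_μ`, within the bound `n` as long as the total count is.
The values agree because weights cannot tell `⊤` from `⊤^i_μ`: they factor through `collapseTop`.
-/

section Words

variable {A : Type*} (σ : ℕ → A) (a : A) (lo : ℕ)

theorem cnt_self : cnt σ a lo lo = 0 := by
  simp [cnt]

theorem cnt_mono {hi hi' : ℕ} (h : hi ≤ hi') : cnt σ a lo hi ≤ cnt σ a lo hi' := by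
  classical
  exact Finset.card_le_card <|
    Finset.filter_subset_filter _ <| Finset.Ico_subset_Ico_right h

variable {σ a lo}

theorem cnt_succ_of_eq {hi : ℕ} (h : lo ≤ hi) (hσ : σ hi = a) :
    cnt σ a lo (hi + 1) = cnt σ a lo hi + 1 := by
  classical
  rw [cnt, ← Finset.insert_Ico_right_eq_Ico_add_one h, Finset.filter_insert, if_pos hσ,
    Finset.card_insert_of_notMem (by simp), cnt]

theorem cnt_succ_of_ne {hi : ℕ} (h : lo ≤ hi) (hσ : σ hi ≠ a) :
    cnt σ a lo (hi + 1) = cnt σ a lo hi := by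
  classical
  rw [cnt, ← Finset.insert_Ico_right_eq_Ico_add_one h, Finset.filter_insert, if_neg hσ, cnt]

theorem cnt_succ_self (hσ : σ lo = a) : cnt σ a lo (lo + 1) = 1 := by
  rw [cnt_succ_of_eq le_rfl hσ, cnt_self]

theorem cnt_pos {hi : ℕ} (h : lo < hi) (hσ : σ lo = a) : 0 < cnt σ a lo hi :=
  calc 0 < cnt σ a lo (lo + 1) := by rw [cnt_succ_self hσ]; exact one_pos
    _ ≤ cnt σ a lo hi := cnt_mono σ a lo h

end Words

section Runs

variable {Q Q' A : Type*} {T T' : Q → A → Q → Prop} {q₀ : Q} {m i : ℕ} {σ : ℕ → A} {q r : ℕ → Q}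

/-- The state sequence that follows `q` up to and including position `i` and `r` afterwards; it is
used to replace the tail of a run. -/
def spliceAfter (i : ℕ) (q r : ℕ → Q) (j : ℕ) : Q :=
  if j ≤ i then q j else r j

theorem spliceAfter_of_le {j : ℕ} (h : j ≤ i) : spliceAfter i q r j = q j :=
  if_pos h

theorem spliceAfter_of_lt {j : ℕ} (h : i < j) : spliceAfter i q r j = r j :=
  if_neg h.not_ge

theorem IsRun.of_le (hq : IsRun T q₀ m σ q) (h : i ≤ m) : IsRun T q₀ i σ q :=
  ⟨hq.1, fun j hj => hq.2 j (hj.trans_le h)⟩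

theorem IsRun.mono (hq : IsRun T q₀ m σ q)
    (h : ∀ j < m, T (q j) (σ j) (q (j + 1)) → T' (q j) (σ j) (q (j + 1))) :
    IsRun T' q₀ m σ q :=
  ⟨hq.1, fun j hj => h j hj (hq.2 j hj)⟩

theorem IsRun.eq_of_absorbing {s : Q} (hs : ∀ a p, T s a p → p = s) (hq : IsRun T q₀ m σ q)
    (hi : q i = s) {j : ℕ} (hij : i ≤ j) (hjm : j ≤ m) : q j = s := by
  induction j, hij using Nat.le_induction with
  | base => exact hi
  | succ j _ ih =>
    have hstep := hq.2 j hjm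
    rw [ih (Nat.le_of_succ_le hjm)] at hstep
    exact hs _ _ hstep

theorem IsRun.isRun_spliceAfter (hq : IsRun T q₀ i σ q) (hi : T (q i) (σ i) (r (i + 1)))
    (hr : ∀ j, i < j → j < m → T (r j) (σ j) (r (j + 1))) :
    IsRun T q₀ m σ (spliceAfter i q r) := by
  refine ⟨(spliceAfter_of_le i.zero_le).trans hq.1, fun j hj => ?_⟩
  rcases lt_trichotomy j i with hji | rfl | hij
  · rw [spliceAfter_of_le hji.le, spliceAfter_of_le hji]
    exact hq.2 j hji
  · rwa [spliceAfter_of_le le_rfl, spliceAfter_of_lt j.lt_succ_self]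
  · rw [spliceAfter_of_lt hij, spliceAfter_of_lt (Nat.lt_succ_of_lt hij)]
    exact hr j hij hj

theorem revSum_congr {d e : ℕ → Ordl} {m : ℕ} (h : ∀ i < m, d i = e i) :
    revSum d m = revSum e m := by
  induction m with
  | zero => rfl
  | succ k ih => rw [revSum, revSum, h k k.lt_succ_self, ih fun i hi => h i (Nat.lt_succ_of_lt hi)]

theorem runVal_eq_of_map_eq {wt : Q → A → Q → Ordl} {wt' : Q' → A → Q' → Ordl} {f : Q → Q'}
    (hwt : ∀ p a p', wt' (f p) a (f p') = wt p a p') (h : ∀ j ≤ m, f (q j) = f (r j)) :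
    runVal wt m σ q = runVal wt m σ r :=
  revSum_congr fun j hj => by rw [← hwt, h j hj.le, h (j + 1) hj, hwt]

end Runs

section AntecedentAutomata

variable {S : CES} {P : PreProof S} {O : OTF S} {ν0 : P.Node} {τ1 : S.TA}
  {p p' q₀ : AState P.Node S.TA} {a : Sig P} {μ ν : P.Node} {n m i j : ℕ} {σ : ℕ → Sig P}
  {q : ℕ → AState P.Node S.TA}

theorem ATrans.eq_top_of_top_left (h : ATrans P O ν0 τ1 .top a p) : p = .top := by
  cases h
  rfl

theorem ATrans.exists_eq_inl_of_top_right (h : ATrans P O ν0 τ1 p a .top) :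
    ∃ μ : P.Node, a = Sum.inl μ := by
  cases h <;> exact ⟨_, rfl⟩

theorem ATrans.toATransN (h : ATrans P O ν0 τ1 p a p') (hp' : p' ≠ .top) (n : ℕ) :
    ATransN P O n ν0 τ1 p a p' := by
  cases h with
  | start => exact .start
  | step hedge hδ => exact .step hedge hδ
  | toBot hax hσ' hσ => exact .toBot hax hσ' hσ
  | toTop => exact absurd rfl hp'
  | topLoop => exact absurd rfl hp'

theorem ATrans.toATransN_topn_one (h : ATrans P O ν0 τ1 p (Sum.inl μ) .top) (hp : p ≠ .top)
    (n : ℕ) : ATransN P O n ν0 τ1 p (Sum.inl μ) (.topn μ 1) := by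
  cases h with
  | toTop hedge => exact .toTopn hedge
  | topLoop => exact absurd rfl hp

theorem ATransN.topn_cnt_succ (hij : i < j) (hσi : σ i = Sum.inl μ) (hσj : σ j = Sum.inl ν)
    (hn : cnt σ (Sum.inl μ) i (j + 1) ≤ n) :
    ATransN P O n ν0 τ1 (.topn μ (cnt σ (Sum.inl μ) i j)) (σ j)
      (.topn μ (cnt σ (Sum.inl μ) i (j + 1))) := by
  have hpos : 0 < cnt σ (Sum.inl μ) i j := cnt_pos hij hσi
  rcases eq_or_ne ν μ with rfl | hne
  · rw [cnt_succ_of_eq hij.le hσj] at hn ⊢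
    rw [hσj]
    exact .topnStep hpos hn
  · have hletter : σ j ≠ Sum.inl μ := by simpa [hσj] using hne
    rw [cnt_succ_of_ne hij.le hletter] at hn ⊢
    rw [hσj]
    exact .topnStay hpos hn hne

theorem Awt_collapseTop (p : AState P.Node S.TA) (a : Sig P) (p' : AState P.Node S.TA) :
    Awt P (collapseTop p) a (collapseTop p') = Awt P p a p' := by
  cases p <;> cases p' <;> rfl

theorem IsRun.eq_top_of_le (hq : IsRun (ATrans P O ν0 τ1) q₀ m σ q) (hi : q i = .top)
    (hij : i ≤ j) (hjm : j ≤ m) : q j = .top :=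
  hq.eq_of_absorbing (fun _ _ => ATrans.eq_top_of_top_left) hi hij hjm

theorem IsRun.toATransN (hq : IsRun (ATrans P O ν0 τ1) q₀ m σ q) (hne : ∀ j ≤ m, q j ≠ .top)
    (n : ℕ) : IsRun (ATransN P O n ν0 τ1) q₀ m σ q :=
  hq.mono fun j hj h => h.toATransN (hne (j + 1) hj) n

theorem IsRun.isRun_spliceAfter_topn_cnt (hq : IsRun (ATrans P O ν0 τ1) q₀ m σ q) (him : i < m)
    (htop : q (i + 1) = .top) (hne : ∀ j ≤ i, q j ≠ .top) (hσi : σ i = Sum.inl μ)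
    (hn : cnt σ (Sum.inl μ) i m ≤ n) :
    IsRun (ATransN P O n ν0 τ1) q₀ m σ
      (spliceAfter i q fun j => .topn μ (cnt σ (Sum.inl μ) i j)) := by
  refine ((hq.of_le him.le).toATransN hne n).isRun_spliceAfter ?_ fun j hij hjm => ?_
  · have hentry : ATrans P O ν0 τ1 (q i) (Sum.inl μ) .top := by
      rw [← hσi, ← htop]
      exact hq.2 i him
    rw [cnt_succ_self hσi, hσi]
    exact hentry.toATransN_topn_one (hne i le_rfl) n
  · have hstep := hq.2 j hjm
    rw [hq.eq_top_of_le htop (Nat.succ_le_succ hij.le) hjm] at hstep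
    obtain ⟨ν, hσj⟩ := hstep.exists_eq_inl_of_top_right
    exact ATransN.topn_cnt_succ hij hσi hσj ((cnt_mono σ _ i hjm).trans hn)

theorem IsRun.runVal_spliceAfter_topn (hq : IsRun (ATrans P O ν0 τ1) q₀ m σ q)
    (htop : q (i + 1) = .top) (μ : P.Node) (k : ℕ → ℕ) :
    runVal (Awt P) m σ (spliceAfter i q fun j => .topn μ (k j)) = runVal (Awt P) m σ q := by
  refine runVal_eq_of_map_eq Awt_collapseTop fun j hjm => ?_
  rcases le_or_gt j i with hji | hij
  · rw [spliceAfter_of_le hji]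
  · rw [spliceAfter_of_lt hij, hq.eq_top_of_le htop hij hjm]
    rfl

end AntecedentAutomata

/-- **Relative Completeness of the Approximate Automata.**
Let `q` be a run of the full automaton `𝒜(ω)^{(P,ν0)}_{(τ1,·)}` over the word
`σ 0, …, σ (m-1)`.  If the run never reaches `⊤` then it is itself a run of
every approximate automaton `𝒜(n)` (`n > 0`).  Otherwise, let `i` be the
least index with `q (i+1) = ⊤`; then the letter `σ i` is (the node) `μ`, and
for every `n` at least the number `k` of occurrences of `σ i` among
`σ i, …, σ (m-1)`, replacing each state beyond position `i` by
`⊤^{k'}_μ` — where `k'` counts the occurrences of `σ i` among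
`σ i, …, σ (j-1)` — yields a run of `𝒜(n)^{(P,ν0)}_{(τ1,·)}` with the same
value. -/
theorem relative_completeness_of_approximate_automata
    (S : CES) (P : PreProof S) (O : OTF S)
    (ν0 : P.Node) (τ1 : S.TA)
    (m : ℕ) (σ : ℕ → Sig P) (q : ℕ → AState P.Node S.TA)
    (hrun : IsRun (ATrans P O ν0 τ1) AState.init m σ q) :
    ((∀ j ≤ m, q j ≠ AState.top) →
      ∀ n : ℕ, 0 < n → IsRun (ATransN P O n ν0 τ1) AState.init m σ q) ∧
    (∀ i : ℕ, i + 1 ≤ m → q (i + 1) = AState.top → (∀ j ≤ i, q j ≠ AState.top) →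
      ∃ μ : P.Node, σ i = Sum.inl μ ∧
        ∀ n : ℕ, 0 < n → cnt σ (Sum.inl μ) i m ≤ n →
          IsRun (ATransN P O n ν0 τ1) AState.init m σ
            (fun j => if j ≤ i then q j else AState.topn μ (cnt σ (Sum.inl μ) i j)) ∧
          runVal (Awt P) m σ
            (fun j => if j ≤ i then q j else AState.topn μ (cnt σ (Sum.inl μ) i j)) =
          runVal (Awt P) m σ q) := by
  refine ⟨fun hne n _ => hrun.toATransN hne n, fun i him htop hne => ?_⟩
  obtain ⟨μ, hσi⟩ : ∃ μ : P.Node, σ i = Sum.inl μ :=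
    (htop ▸ hrun.2 i him).exists_eq_inl_of_top_right
  exact ⟨μ, hσi, fun n _ hn =>
    ⟨hrun.isRun_spliceAfter_topn_cnt him htop hne hσi hn, hrun.runVal_spliceAfter_topn htop μ _⟩⟩
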